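/- Let (I,·) be a Cartan datum with a total order on I, and let i = (j⁽¹⁾)^{n_1} ⋯ (j⁽ᵐ⁾)^{n_m} be the canonical factorization of a word i, where j⁽¹⁾ > ⋯ > j⁽ᵐ⁾ are Lyndon words and n_1,…,n_m ≥ 1. Set β_k := |j⁽ᵏ⁾| for k = 1,…,m. Then in the iterated quantum shuffle product (j⁽¹⁾)°ⁿ¹ ° (j⁽²⁾)°ⁿ² ° ⋯ ° (j⁽ᵐ⁾)°ⁿᵐ (each j⁽ᵏ⁾ shuffled with itself n_k times), the coefficient of the basis word i equals ∏_{k=1}^{m} q_{β_k}^{-n_k(n_k-1)/2} [n_k]!_{β_k}, and every other basis word occurring with nonzero coefficient is lexicographically strictly smaller than i. -/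

import Mathlib

open LaurentPolynomial

/-- A nonempty word is Lyndon if it is lexicographically strictly smaller than each of its
proper nonempty suffixes. -/
def IsLyndonWord {I : Type*} [LinearOrder I] (l : List I) : Prop :=
  l ≠ [] ∧ ∀ t s : List I, t ≠ [] → s ≠ [] → l = t ++ s → l < s

/-- Extension of the Cartan form `c` to the free abelian group `ℤ[I]`. -/
def bform {I : Type*} [Fintype I] (c : I → I → ℤ) (β γ : I →₀ ℤ) : ℤ :=
  ∑ i : I, ∑ j : I, β i * γ j * c i j

/-- The weight `|w| ∈ ℤ[I]` of a word `w`. -/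
noncomputable def wtZ {I : Type*} (w : List I) : I →₀ ℤ :=
  (w.map fun i => Finsupp.single i (1 : ℤ)).sum

/-- A shuffle permutation for two blocks, the first of length `d`: the inverse is strictly
increasing on each of the two blocks. -/
def IsShuffle2 (d : ℕ) {n : ℕ} (σ : Equiv.Perm (Fin n)) : Prop :=
  ∀ a b : Fin n, a < b →
    ((a.val < d ∧ b.val < d) ∨ (d ≤ a.val ∧ d ≤ b.val)) → σ⁻¹ a < σ⁻¹ b

/-- The statistic `e(σ)`: the sum of `u_{σ(k)} · u_{σ(m)}` over all pairs `k ≤ d < m` with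
`σ⁻¹(k) > σ⁻¹(m)` (0-indexed: `k < d ≤ m`). -/
def eStat {I : Type*} (c : I → I → ℤ) (u : List I) (d : ℕ)
    (σ : Equiv.Perm (Fin u.length)) : ℤ :=
  ∑ k : Fin u.length, ∑ m : Fin u.length,
    if k.val < d ∧ d ≤ m.val ∧ σ⁻¹ m < σ⁻¹ k then c (u.get (σ k)) (u.get (σ m)) else 0

open scoped Classical in
/-- The quantum shuffle product of two basis words, as an element of the free
`ℤ[q,q⁻¹]`-module on the set of words. -/
noncomputable def wordShuffle {I : Type*} [Fintype I] [DecidableEq I] (c : I → I → ℤ)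
    (x y : List I) : (List I) →₀ LaurentPolynomial ℤ :=
  ∑ σ : Equiv.Perm (Fin (x ++ y).length),
    if IsShuffle2 x.length σ then
      Finsupp.single (List.ofFn fun p => (x ++ y).get (σ p))
        (T (- eStat c (x ++ y) x.length σ))
    else 0

/-- The quantum shuffle product of a basis word with a general element. -/
noncomputable def shuffleF {I : Type*} [Fintype I] [DecidableEq I] (c : I → I → ℤ)
    (x : List I) (g : (List I) →₀ LaurentPolynomial ℤ) : (List I) →₀ LaurentPolynomial ℤ :=
  g.sum fun y b => b • wordShuffle c x y

/-- The iterated quantum shuffle product of a list of words. -/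
noncomputable def shuffleList {I : Type*} [Fintype I] [DecidableEq I] (c : I → I → ℤ) :
    List (List I) → (List I) →₀ LaurentPolynomial ℤ
  | [] => Finsupp.single [] 1
  | x :: xs => shuffleF c x (shuffleList c xs)

/-- The quantum integer `[n]_β = q_β^{n-1} + q_β^{n-3} + ⋯ + q_β^{-(n-1)}`,
where `q_β = q^{(β·β)/2}`. -/
noncomputable def qInt {I : Type*} [Fintype I] (c : I → I → ℤ) (β : I →₀ ℤ) (n : ℕ) :
    LaurentPolynomial ℤ :=
  ∑ t ∈ Finset.range n, T (bform c β β / 2 * ((n : ℤ) - 1 - 2 * (t : ℤ)))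

/-- The quantum factorial `[n]!_β = [n]_β [n-1]_β ⋯ [1]_β`. -/
noncomputable def qFact {I : Type*} [Fintype I] (c : I → I → ℤ) (β : I →₀ ℤ) (n : ℕ) :
    LaurentPolynomial ℤ :=
  ∏ t ∈ Finset.range n, qInt c β (t + 1)


namespace TopCoeff

/-- Weighted value of a word. -/
def fv {I : Type*} (g : I → ℚ) (t : ℚ) : List I → ℚ
  | [] => 0
  | a :: l => g a + t * fv g t l

theorem fv_append {I : Type*} (g : I → ℚ) (t : ℚ) (l l' : List I) :
    fv g t (l ++ l') = fv g t l + t ^ l.length * fv g t l' := by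
  induction l with
  | nil => simp [fv]
  | cons a l ih => simp only [List.cons_append, fv, ih, List.length_cons, pow_succ]; ring

theorem fv_take {I : Type*} (g : I → ℚ) (t : ℚ) (l : List I) (i : ℕ) :
    ∑ k ∈ Finset.range i, (l.map g).getD k 0 * t ^ k = fv g t (l.take i) := by
  induction l generalizing i with
  | nil => simp [fv]
  | cons a l ih =>
    cases i with
    | zero => simp [fv]
    | succ i =>
      rw [Finset.sum_range_succ']
      simp only [List.map_cons, List.getD_cons_succ, List.getD_cons_zero, List.take_succ_cons, fv,
        ← ih, Finset.mul_sum, pow_succ]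
      rw [add_comm]
      congr 1
      · simp
      · refine Finset.sum_congr rfl fun k _ => by ring

theorem fv_ofFn {I : Type*} (g : I → ℚ) (t : ℚ) {n : ℕ} (F : Fin n → I) :
    fv g t (List.ofFn F) = ∑ p : Fin n, g (F p) * t ^ (p : ℕ) := by
  induction n with
  | zero => simp [fv]
  | succ n ih =>
    rw [List.ofFn_succ, Fin.sum_univ_succ]
    simp only [fv, ih, Finset.mul_sum, Fin.val_zero, pow_zero, mul_one, Fin.val_succ, pow_succ]
    congr 1
    refine Finset.sum_congr rfl fun k _ => by ring

/-- Lexicographic monotonicity of the value. -/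
def LM {I : Type*} [LinearOrder I] (g : I → ℚ) (t : ℚ) : Prop :=
  ∀ l l' : List I, l.length = l'.length → l < l' → fv g t l < fv g t l'

theorem LM.inj {I : Type*} [LinearOrder I] {g : I → ℚ} {t : ℚ} (h : LM g t) {l l' : List I}
    (hl : l.length = l'.length) (he : fv g t l = fv g t l') : l = l' := by
  rcases lt_trichotomy l l' with h1 | h1 | h1
  · exact absurd (h _ _ hl h1) (by simp [he])
  · exact h1
  · exact absurd (h _ _ hl.symm h1) (by simp [he])

theorem LM.lt {I : Type*} [LinearOrder I] {g : I → ℚ} {t : ℚ} (h : LM g t) {l l' : List I}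
    (hl : l.length = l'.length) (he : fv g t l < fv g t l') : l < l' := by
  rcases lt_trichotomy l l' with h1 | h1 | h1
  · exact h1
  · subst h1; exact absurd he (lt_irrefl _)
  · exact absurd (h _ _ hl.symm h1) (not_lt.2 he.le)

theorem fv_shift {I : Type*} (g : I → ℚ) (t μ : ℚ) (w : List I) :
    fv (fun a => g a - μ) t w = fv g t w - μ * ∑ i ∈ Finset.range w.length, t ^ i := by
  induction w with
  | nil => simp [fv]
  | cons a l ih =>
    simp only [fv, ih, List.length_cons, Finset.sum_range_succ', pow_succ, ← Finset.sum_mul]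
    ring

theorem exists_LM {I : Type*} [Fintype I] [LinearOrder I] :
    ∃ t : ℚ, 0 < t ∧ t < 1 ∧ ∀ x : List I, x ≠ [] → ∃ g : I → ℚ, LM g t ∧ fv g t x = 0 := by
  classical
  set N : ℕ := Fintype.card I + 2 with hN
  let r : I → ℕ := fun i => (Finset.univ.filter (· < i)).card
  have hr : ∀ i, r i ≤ Fintype.card I := fun i => Finset.card_le_univ _
  have hmono : ∀ a b, a < b → r a + 1 ≤ r b := by
    intro a b hab
    apply Nat.succ_le_of_lt
    apply Finset.card_lt_card
    rw [Finset.ssubset_iff_of_subset]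
    · exact ⟨a, by simpa using hab, by simp⟩
    · intro c hc
      simp only [Finset.mem_filter, Finset.mem_univ, true_and] at hc ⊢
      exact hc.trans hab
  let t : ℚ := 1 / N
  have hNp : (2 : ℚ) ≤ N := by rw [hN]; push_cast; linarith [Nat.cast_nonneg (α := ℚ) (Fintype.card I)]
  have ht0 : 0 < t := by positivity
  have ht1 : t < 1 := by
    rw [div_lt_one (by linarith)]; linarith
  have htN : t * N = 1 := by
    simp only [t]; field_simp
  let g : I → ℚ := fun i => r i
  have h0 : ∀ l, 0 ≤ fv g t l := by
    intro l
    induction l with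
    | nil => simp [fv]
    | cons a l ih => simp only [fv]; positivity
  have h1 : ∀ l, t * fv g t l < 1 := by
    intro l
    induction l with
    | nil => simp [fv]
    | cons a l ih =>
      simp only [fv]
      have : g a + t * fv g t l < N := by
        have h3 : (r a : ℚ) ≤ Fintype.card I := by exact_mod_cast hr a
        have : g a + 2 ≤ N := by
          simp only [g, hN]; push_cast; linarith
        linarith
      calc _ < t * N := by gcongr
        _ = 1 := htN
  have hLM : LM g t := by
    intro l
    induction l with
    | nil => intro l' hl hlt; simp at hl; rw [eq_comm, List.length_eq_zero_iff] at hl; subst hl; exact absurd hlt (lt_irrefl _)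
    | cons a l ih =>
      intro l' hl hlt
      cases l' with
      | nil => simp at hl
      | cons b l' =>
        rw [List.cons_lt_cons_iff] at hlt
        simp only [fv]
        rcases hlt with hab | ⟨rfl, hlt⟩
        · have h3 : g a + 1 ≤ g b := by
            have := hmono a b hab
            simp only [g]; exact_mod_cast this
          have := h1 l
          have := mul_nonneg ht0.le (h0 l')
          linarith
        · have := ih l' (by simpa using hl) hlt
          gcongr
  refine ⟨t, ht0, ht1, fun x hx => ?_⟩
  set S := ∑ i ∈ Finset.range x.length, t ^ i with hS
  have hSp : 0 < S := by
    apply Finset.sum_pos (fun i _ => by positivity)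
    simpa using hx
  refine ⟨fun a => g a - fv g t x / S, ?_, ?_⟩
  · intro l l' hl hlt
    have := hLM l l' hl hlt
    rw [fv_shift, fv_shift, hl]; linarith
  · rw [fv_shift, ← hS]; field_simp; ring

theorem lt_append {I : Type*} [LinearOrder I] {l l' : List I} (h : l < l') (hp : ¬ l <+: l')
    (u v : List I) : l ++ u < l' ++ v := by
  induction l generalizing l' with
  | nil => simp at hp
  | cons a l ih =>
    cases l' with
    | nil => simp at h
    | cons b l' =>
      rw [List.cons_lt_cons_iff] at h
      simp only [List.cons_append]
      rw [List.cons_lt_cons_iff]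
      rcases h with h | ⟨rfl, h⟩
      · exact Or.inl h
      · refine Or.inr ⟨rfl, ih h ?_⟩
        intro h'; exact hp (by simpa using h')

theorem fv_neg {I : Type*} [LinearOrder I] {g : I → ℚ} {t : ℚ} (ht0 : 0 < t) (ht1 : t < 1)
    (hLM : LM g t) {x : List I} (hx : IsLyndonWord x) (hx0 : fv g t x = 0) {p : List I}
    (hp : p ≠ []) (hpx : p < x) : fv g t p < 0 := by
  by_cases hpre : p <+: x
  · obtain ⟨s, rfl⟩ := hpre
    have hs : s ≠ [] := by
      rintro rfl; simp at hpx
    have h1 := hx.2 p s hp hs rfl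
    have hplen : 0 < p.length := List.length_pos_iff.2 hp
    have hslen : 0 < s.length := List.length_pos_iff.2 hs
    have h2 := lt_append h1 (fun h => by have := h.length_le; simp at this; exact hp this) [] p
    have h3 := hLM _ _ (by simp; omega) h2
    rw [List.append_nil, hx0, fv_append] at h3
    rw [fv_append] at hx0
    have h4 : t ^ p.length * fv g t s = - fv g t p := by linarith
    have ha : 0 < t ^ p.length := by positivity
    have hb : t ^ (p.length + s.length) < 1 := pow_lt_one₀ ht0.le ht1 (by omega)
    have h5 := mul_pos ha h3
    rw [mul_add, h4, ← mul_assoc, ← pow_add] at h5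
    nlinarith
  · have h2 := lt_append hpx hpre x p
    have h3 := hLM _ _ (by simp; omega) h2
    rw [fv_append, fv_append, hx0] at h3
    have hxlen : 0 < x.length := List.length_pos_iff.2 hx.1
    have hb : t ^ x.length < 1 := pow_lt_one₀ ht0.le ht1 (by omega)
    nlinarith

theorem abel (b s : ℕ → ℚ) (e : ℕ) : ∑ j ∈ Finset.range e, b j * s j =
    s e * ∑ j ∈ Finset.range e, b j +
      ∑ j ∈ Finset.range e, (∑ i ∈ Finset.range (j + 1), b i) * (s j - s (j + 1)) := by
  induction e with
  | zero => simp
  | succ e ih =>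
    rw [Finset.sum_range_succ, ih]
    rw [Finset.sum_range_succ (fun j => (∑ i ∈ Finset.range (j + 1), b i) * (s j - s (j + 1)))]
    rw [Finset.sum_range_succ b]
    ring

/-- Positions given by the inverse of a permutation, as a function on `ℕ`. -/
def piN {n : ℕ} (σ : Equiv.Perm (Fin n)) (k : ℕ) : ℕ :=
  if h : k < n then (σ⁻¹ ⟨k, h⟩ : Fin n) else 0

theorem fvW {I : Type*} (g : I → ℚ) (t : ℚ) (x y : List I)
    (σ : Equiv.Perm (Fin (x ++ y).length)) :
    fv g t (List.ofFn fun p => (x ++ y).get (σ p)) =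
      ∑ k ∈ Finset.range x.length, (x.map g).getD k 0 * t ^ (piN σ k) +
      ∑ j ∈ Finset.range y.length, (y.map g).getD j 0 * t ^ (piN σ (x.length + j)) := by
  rw [fv_ofFn, ← Equiv.sum_comp σ⁻¹]
  have h1 : ∀ k : Fin (x ++ y).length,
      g ((x ++ y).get (σ (σ⁻¹ k))) * t ^ ((σ⁻¹ k : Fin _) : ℕ) =
        (fun k : ℕ => ((x ++ y).map g).getD k 0 * t ^ (piN σ k)) (k : ℕ) := by
    intro k
    have hk : σ (σ⁻¹ k) = k := by simp
    rw [hk]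
    simp only [piN, k.2, dif_pos]
    congr 1
    rw [List.getD_eq_getElem _ _ (by simpa using k.2), List.getElem_map]
    rfl
  rw [Finset.sum_congr rfl fun k _ => h1 k, ← Finset.sum_range
    (fun k : ℕ => ((x ++ y).map g).getD k 0 * t ^ (piN σ k))]
  generalize piN σ = π
  rw [List.length_append, Finset.sum_range_add]
  congr 1
  · refine Finset.sum_congr rfl fun k hk => ?_
    rw [Finset.mem_range] at hk
    rw [List.map_append, List.getD_append _ _ _ _ (by simpa using hk)]
  · refine Finset.sum_congr rfl fun k hk => ?_
    rw [List.map_append, List.getD_append_right _ _ _ _ (by simp)]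
    simp

/-- Block insertion permutation. -/
def blk (n d r : ℕ) (h : d + r ≤ n) : Equiv.Perm (Fin n) where
  toFun p := ⟨if (p : ℕ) < r then p + d else if (p : ℕ) < r + d then p - r else p, by
    have := p.2; split_ifs <;> omega⟩
  invFun k := ⟨if (k : ℕ) < d then k + r else if (k : ℕ) < d + r then k - d else k, by
    have := k.2; split_ifs <;> omega⟩
  left_inv p := by
    ext; simp only; split_ifs <;> omega
  right_inv p := by
    ext; simp only; split_ifs <;> omega

theorem blk_inv (n d r : ℕ) (h : d + r ≤ n) (k : Fin n) : (((blk n d r h)⁻¹ k : Fin n) : ℕ) =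
    if (k : ℕ) < d then k + r else if (k : ℕ) < d + r then k - d else k := rfl

theorem blk_shuffle (n d r : ℕ) (h : d + r ≤ n) : IsShuffle2 d (blk n d r h) := by
  intro a b hab hc
  rw [Fin.lt_def, blk_inv, blk_inv]
  rw [Fin.lt_def] at hab
  split_ifs <;> omega

theorem piN_mono {n d : ℕ} {σ : Equiv.Perm (Fin n)} (hσ : IsShuffle2 d σ) {a b : ℕ} (hab : a < b)
    (hb : b < n) (hc : b < d ∨ d ≤ a) : piN σ a < piN σ b := by
  have := hσ ⟨a, hab.trans hb⟩ ⟨b, hb⟩ hab (by simp; omega)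
  simpa [piN, hb, hab.trans hb] using this

theorem piN_lt {n : ℕ} (σ : Equiv.Perm (Fin n)) {a : ℕ} (ha : a < n) : piN σ a < n := by
  simp [piN, ha]

theorem piN_le {n d : ℕ} {σ : Equiv.Perm (Fin n)} (hσ : IsShuffle2 d σ) {a : ℕ} (had : d ≤ a)
    (ha : a < n) : piN σ a ≤ a := by
  have : ∀ m a, d ≤ a → a + m + 1 = n → piN σ a + m + 1 ≤ n := by
    intro m
    induction m with
    | zero => intro a h1 h2; have := piN_lt σ (a := a) (by omega); omega
    | succ m ih =>
      intro a h1 h2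
      have h3 := ih (a + 1) (by omega) (by omega)
      have := piN_mono hσ (show a < a + 1 by omega) (by omega) (Or.inr h1)
      omega
  have := this (n - a - 1) a had (by omega)
  omega

theorem piN_ge {n d : ℕ} {σ : Equiv.Perm (Fin n)} (hσ : IsShuffle2 d σ) {j : ℕ}
    (ha : d + j < n) : j ≤ piN σ (d + j) := by
  induction j with
  | zero => omega
  | succ j ih =>
    have := ih (by omega)
    have := piN_mono hσ (show d + j < d + (j + 1) by omega) (by omega) (Or.inr (by omega))
    omega

theorem piN_ge' {n d : ℕ} {σ : Equiv.Perm (Fin n)} (hσ : IsShuffle2 d σ) {j : ℕ}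
    (hj : j < d) (ha : j < n) : j ≤ piN σ j := by
  induction j with
  | zero => omega
  | succ j ih =>
    have := ih (by omega) (by omega)
    have := piN_mono hσ (show j < (j + 1) by omega) (by omega) (Or.inl (by omega))
    omega

theorem eq_blk {n d r : ℕ} {σ : Equiv.Perm (Fin n)} (hσ : IsShuffle2 d σ) (h : d + r ≤ n)
    (hx : ∀ k, k < d → piN σ k = k + r) : σ = blk n d r h := by
  have hτ := blk_shuffle n d r h
  have key : ∀ k : Fin n, (k : ℕ) < d → σ⁻¹ k = (blk n d r h)⁻¹ k := by
    intro k hk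
    ext
    rw [blk_inv, if_pos hk, ← hx k hk]
    simp [piN]
  have hr : ∀ ρ : Equiv.Perm (Fin n), Set.range (fun j : {k : Fin n // d ≤ (k : ℕ)} => ρ⁻¹ j.1) =
      {p | ∀ k : Fin n, (k : ℕ) < d → p ≠ ρ⁻¹ k} := by
    intro ρ
    ext p
    simp only [Set.mem_range, Set.mem_ofPred_eq]
    constructor
    · rintro ⟨⟨j, hj⟩, rfl⟩ k hk he
      have := (ρ⁻¹).injective he
      simp only at this
      subst this; omega
    · intro hp
      refine ⟨⟨ρ p, ?_⟩, by simp⟩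
      by_contra hlt
      exact hp (ρ p) (by omega) (by simp)
  have hs : ∀ ρ : Equiv.Perm (Fin n), IsShuffle2 d ρ →
      StrictMono (fun j : {k : Fin n // d ≤ (k : ℕ)} => ρ⁻¹ j.1) := by
    intro ρ hρ a b hab
    exact hρ a.1 b.1 hab (Or.inr ⟨a.2, b.2⟩)
  have hreq : Set.range (fun j : {k : Fin n // d ≤ (k : ℕ)} => σ⁻¹ j.1) =
      Set.range (fun j : {k : Fin n // d ≤ (k : ℕ)} => (blk n d r h)⁻¹ j.1) := by
    rw [hr, hr]
    ext p
    simp only [Set.mem_ofPred_eq]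
    refine forall_congr' fun k => forall_congr' fun hk => ?_
    rw [key k hk]
  have hfe := ((hs σ hσ).range_inj (hs _ hτ)).1 hreq
  have : σ⁻¹ = (blk n d r h)⁻¹ := by
    ext1 k
    by_cases hk : (k : ℕ) < d
    · exact key k hk
    · exact congrFun hfe ⟨k, by omega⟩
  exact inv_injective this

theorem xpart {a : ℕ → ℚ} {t : ℚ} (ht0 : 0 < t) (ht1 : t < 1) {d : ℕ} {π : ℕ → ℕ}
    (hA : ∀ i, 0 < i → i < d → ∑ k ∈ Finset.range i, a k * t ^ k < 0)
    (hd : ∑ k ∈ Finset.range d, a k * t ^ k = 0)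
    (hge : ∀ k, k < d → k ≤ π k)
    (hπ : ∀ k, k + 1 < d → π k < π (k + 1)) :
    ∑ k ∈ Finset.range d, a k * t ^ (π k) ≤ 0 ∧
    (∑ k ∈ Finset.range d, a k * t ^ (π k) = 0 → ∀ k, k < d → π k = k + π 0) := by
  have h1 : ∑ k ∈ Finset.range d, a k * t ^ (π k) =
      ∑ k ∈ Finset.range d, (a k * t ^ k) * t ^ (π k - k) := by
    refine Finset.sum_congr rfl fun k hk => ?_
    rw [mul_assoc, ← pow_add]
    congr 2
    have := hge k (by simpa using hk)
    omega
  rw [h1, abel, hd, mul_zero, zero_add]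
  have hterm : ∀ j ∈ Finset.range d, (∑ i ∈ Finset.range (j + 1), a i * t ^ i) *
      (t ^ (π j - j) - t ^ (π (j + 1) - (j + 1))) ≤ 0 := by
    intro j hj
    rw [Finset.mem_range] at hj
    by_cases hjd : j + 1 = d
    · rw [hjd, hd]; simp
    · have h2 := hA (j + 1) (by omega) (by omega)
      have h3 : t ^ (π (j + 1) - (j + 1)) ≤ t ^ (π j - j) :=
        pow_le_pow_of_le_one ht0.le ht1.le (by have := hπ j (by omega); omega)
      exact mul_nonpos_of_nonpos_of_nonneg h2.le (by linarith)
  refine ⟨Finset.sum_nonpos hterm, fun h0 => ?_⟩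
  rw [Finset.sum_eq_zero_iff_of_nonpos hterm] at h0
  intro k
  induction k with
  | zero => intro _; omega
  | succ k ih =>
    intro hk
    have h2 := h0 k (by simp; omega)
    have h3 := hA (k + 1) (by omega) (by omega)
    have h4 : t ^ (π k - k) = t ^ (π (k + 1) - (k + 1)) := by
      rcases mul_eq_zero.1 h2 with h | h <;> linarith
    have h5 := pow_right_injective₀ ht0 ht1.ne h4
    have := ih (by omega)
    have := hπ k hk
    omega

theorem ypart {b : ℕ → ℚ} {t : ℚ} (ht0 : 0 < t) (ht1 : t < 1) {d e : ℕ} {π : ℕ → ℕ}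
    (hB : ∀ i, i ≤ e → ∑ k ∈ Finset.range i, b k * t ^ k ≤ 0)
    (hge : ∀ k, k < e → k ≤ π k) (hle : ∀ k, k < e → π k ≤ d + k)
    (hπ : ∀ k, k + 1 < e → π k < π (k + 1)) :
    ∑ k ∈ Finset.range e, b k * t ^ (π k) ≤ t ^ d * ∑ k ∈ Finset.range e, b k * t ^ k ∧
    (∑ k ∈ Finset.range e, b k * t ^ (π k) = t ^ d * ∑ k ∈ Finset.range e, b k * t ^ k →
      0 < d → ∀ r, r ≤ e → (∀ k, k < e → π k = if k < r then k else d + k) →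
        ∑ k ∈ Finset.range r, b k * t ^ k = 0) := by
  set s : ℕ → ℕ := fun k => if k < e then π k - k else d with hs
  have h1 : ∑ k ∈ Finset.range e, b k * t ^ (π k) =
      ∑ k ∈ Finset.range e, (b k * t ^ k) * (fun k => t ^ s k) k := by
    refine Finset.sum_congr rfl fun k hk => ?_
    rw [Finset.mem_range] at hk
    simp only [hs, if_pos hk]
    rw [mul_assoc, ← pow_add]
    congr 2
    have := hge k hk
    omega
  have hse : s e = d := by simp [hs]
  rw [h1, abel]
  simp only [hse]
  have hterm : ∀ j ∈ Finset.range e, (∑ i ∈ Finset.range (j + 1), b i * t ^ i) *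
      (t ^ s j - t ^ s (j + 1)) ≤ 0 := by
    intro j hj
    rw [Finset.mem_range] at hj
    have h2 := hB (j + 1) (by omega)
    have h3 : t ^ s (j + 1) ≤ t ^ s j := by
      apply pow_le_pow_of_le_one ht0.le ht1.le
      have := hle j hj
      simp only [hs, if_pos hj]
      split_ifs with h
      · have := hπ j h; omega
      · omega
    exact mul_nonpos_of_nonpos_of_nonneg h2 (by linarith)
  have := Finset.sum_nonpos hterm
  refine ⟨by linarith, fun h0 hd r hr hπr => ?_⟩
  have h0' := (Finset.sum_eq_zero_iff_of_nonpos hterm).1 (by linarith)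
  rcases Nat.eq_zero_or_pos r with rfl | hr0
  · simp
  · have h2 := h0' (r - 1) (by simp; omega)
    rw [Nat.sub_add_cancel hr0] at h2
    rcases mul_eq_zero.1 h2 with h | h
    · exact h
    · exfalso
      have h5 := pow_right_injective₀ ht0 ht1.ne (sub_eq_zero.1 h)
      have h6 := hπr (r - 1) (by omega)
      rw [if_pos (by omega)] at h6
      have h7 : s r = d := by
        simp only [hs]
        split_ifs with hre
        · rw [hπr r hre]; simp
        · rfl
      have h8 : s (r - 1) = 0 := by
        simp only [hs]; rw [if_pos (by omega)]; omega
      omega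

theorem main_le {I : Type*} {g : I → ℚ} {t : ℚ} (ht0 : 0 < t) (ht1 : t < 1)
    {x y : List I} (hxne : x ≠ []) (hx0 : fv g t x = 0)
    (hA : ∀ i, 0 < i → i < x.length → fv g t (x.take i) < 0)
    (hB : ∀ i, i ≤ y.length → fv g t (y.take i) ≤ 0)
    {σ : Equiv.Perm (Fin (x ++ y).length)} (hσ : IsShuffle2 x.length σ) :
    fv g t (List.ofFn fun p => (x ++ y).get (σ p)) ≤ fv g t (x ++ y) ∧
    (fv g t (List.ofFn fun p => (x ++ y).get (σ p)) = fv g t (x ++ y) →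
      ∃ (r : ℕ) (h : x.length + r ≤ (x ++ y).length), fv g t (y.take r) = 0 ∧
        σ = blk _ x.length r h) := by
  have hd : 0 < x.length := List.length_pos_iff.2 hxne
  have hn : (x ++ y).length = x.length + y.length := List.length_append
  rw [fvW, fv_append, hx0, zero_add]
  have hX := xpart (a := fun k => (x.map g).getD k 0) ht0 ht1 (d := x.length) (π := piN σ)
    (fun i h1 h2 => by rw [fv_take]; exact hA i h1 h2)
    (by rw [fv_take, List.take_length, hx0])
    (fun k hk => piN_ge' hσ hk (by omega))
    (fun k hk => piN_mono hσ (by omega) (by omega) (by omega))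
  have hY := ypart (b := fun k => (y.map g).getD k 0) ht0 ht1 (d := x.length) (e := y.length)
    (π := fun j => piN σ (x.length + j))
    (fun i h1 => by rw [fv_take]; exact hB i h1)
    (fun k hk => piN_ge hσ (by omega))
    (fun k hk => piN_le hσ (by omega) (by omega))
    (fun k hk => piN_mono hσ (by omega) (by omega) (by omega))
  rw [fv_take, List.take_length] at hY
  refine ⟨by linarith [hX.1, hY.1], fun he => ?_⟩
  have hπ := hX.2 (by linarith [hX.1, hY.1])
  have hr : x.length + piN σ 0 ≤ (x ++ y).length := by
    have h1 := hπ (x.length - 1) (by omega)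
    have := piN_lt σ (a := x.length - 1) (by omega)
    omega
  have hσe := eq_blk hσ hr hπ
  refine ⟨piN σ 0, hr, ?_, hσe⟩
  have := hY.2 (by linarith [hX.1, hY.1]) hd (piN σ 0) (by omega) ?_
  · rw [fv_take] at this; exact this
  · intro k hk
    have h2 : piN σ (x.length + k) = piN (blk _ x.length _ hr) (x.length + k) := by rw [← hσe]
    rw [h2, piN, dif_pos (by omega), blk_inv]
    simp only
    split_ifs <;> omega

theorem blk_word_fv {I : Type*} {g : I → ℚ} {t : ℚ}
    {x y : List I} (hx0 : fv g t x = 0) (r : ℕ) (h : x.length + r ≤ (x ++ y).length)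
    (hr : fv g t (y.take r) = 0) :
    fv g t (List.ofFn fun p => (x ++ y).get (blk _ x.length r h p)) = fv g t (x ++ y) := by
  have hn : (x ++ y).length = x.length + y.length := List.length_append
  rw [fvW, fv_append, hx0, zero_add]
  have h1 : ∑ k ∈ Finset.range x.length, (x.map g).getD k 0 * t ^ (piN (blk _ x.length r h) k)
      = 0 := by
    have : ∑ k ∈ Finset.range x.length, (x.map g).getD k 0 * t ^ (piN (blk _ x.length r h) k) =
        ∑ k ∈ Finset.range x.length, ((x.map g).getD k 0 * t ^ k) * t ^ r := by
      refine Finset.sum_congr rfl fun k hk => ?_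
      rw [Finset.mem_range] at hk
      rw [piN, dif_pos (by omega), blk_inv]
      simp only [if_pos hk, pow_add]; ring
    rw [this, ← Finset.sum_mul, fv_take, List.take_length, hx0, zero_mul]
  have h2 : ∑ j ∈ Finset.range y.length,
      (y.map g).getD j 0 * t ^ (piN (blk _ x.length r h) (x.length + j)) =
      ∑ j ∈ Finset.range y.length,
      ((y.map g).getD j 0 * t ^ j) * (fun j => if j < r then 1 else t ^ x.length) j := by
    refine Finset.sum_congr rfl fun k hk => ?_
    rw [Finset.mem_range] at hk
    rw [piN, dif_pos (by omega), blk_inv]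
    by_cases hkr : k < r
    · simp [hkr]
    · simp [hkr, pow_add]; ring
  rw [h1, h2, abel, zero_add, fv_take, List.take_length]
  rw [if_neg (by omega), Finset.sum_eq_zero, add_zero]
  intro j hj
  by_cases hjr : j + 1 = r
  · rw [fv_take, hjr, hr, zero_mul]
  · by_cases hj2 : j < r
    · rw [if_pos hj2, if_pos (by omega)]; simp
    · rw [if_neg hj2, if_neg (by omega)]; simp

theorem initial_lt {I : Type*} [LinearOrder I] {p z x : List I} (h : p <+: z) (hzx : z < x) :
    p < x := by
  obtain ⟨s, rfl⟩ := h
  induction p generalizing x with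
  | nil =>
    cases x with
    | nil => simp at hzx
    | cons b x => exact List.nil_lt_cons _ _
  | cons a p ih =>
    cases x with
    | nil => simp at hzx
    | cons b x =>
      rw [List.cons_append, List.cons_lt_cons_iff] at hzx
      rw [List.cons_lt_cons_iff]
      rcases hzx with h | ⟨h, h'⟩
      · exact Or.inl h
      · exact Or.inr ⟨h, ih h'⟩

theorem neg_flatten {I : Type*} [LinearOrder I] {g : I → ℚ} {t : ℚ} (ht0 : 0 < t) (ht1 : t < 1)
    (hLM : LM g t) {x : List I} (hx : IsLyndonWord x) (hx0 : fv g t x = 0)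
    (zs : List (List I)) (hz : ∀ z ∈ zs, z < x) (i : ℕ) (hi : 0 < i)
    (hil : i ≤ zs.flatten.length) : fv g t (zs.flatten.take i) < 0 := by
  induction zs generalizing i with
  | nil => simp at hil; omega
  | cons z zs ih =>
    have hzx := hz z (by simp)
    rw [List.flatten_cons] at hil ⊢
    rw [List.length_append] at hil
    by_cases hiz : i ≤ z.length
    · rw [List.take_append_of_le_length hiz]
      refine fv_neg ht0 ht1 hLM hx hx0 ?_ (initial_lt (List.take_prefix i z) hzx)
      intro h
      have := congrArg List.length h
      simp at this
      rcases this with h | h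
      · omega
      · subst h; simp at hiz; omega
    · have h1 := ih (fun z hz' => hz z (by simp [hz'])) (i - z.length) (by omega) (by omega)
      rw [List.take_append, List.take_of_length_le (by omega), fv_append]
      have h2 : fv g t z ≤ 0 := by
        by_cases hz0 : z = []
        · subst hz0; simp [fv]
        · exact (fv_neg ht0 ht1 hLM hx hx0 hz0 hzx).le
      have : 0 < t ^ z.length := by positivity
      nlinarith

theorem rep_initial {I : Type*} {g : I → ℚ} {t : ℚ} (ht0 : 0 < t)
    {x : List I} (hx0 : fv g t x = 0)
    (hA : ∀ i, 0 < i → i < x.length → fv g t (x.take i) < 0) (Z : List I)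
    (hZ : ∀ i, 0 < i → i ≤ Z.length → fv g t (Z.take i) < 0) (r i : ℕ)
    (hi : i ≤ ((List.replicate r x).flatten ++ Z).length) :
    fv g t (((List.replicate r x).flatten ++ Z).take i) ≤ 0 ∧
    (fv g t (((List.replicate r x).flatten ++ Z).take i) = 0 → ∃ k, k ≤ r ∧ i = k * x.length) := by
  induction r generalizing i with
  | zero =>
    simp only [List.replicate_zero, List.flatten_nil, List.nil_append] at hi ⊢
    rcases Nat.eq_zero_or_pos i with rfl | h0
    · simp [fv]
    · have := hZ i h0 hi
      exact ⟨this.le, fun h => absurd h this.ne⟩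
  | succ r ih =>
    rw [List.replicate_succ, List.flatten_cons, List.append_assoc] at hi ⊢
    rw [List.length_append] at hi
    by_cases hix : i < x.length
    · rw [List.take_append_of_le_length hix.le]
      rcases Nat.eq_zero_or_pos i with rfl | h0
      · simp only [List.take_zero, fv, le_refl, true_and]
        intro _; exact ⟨0, by omega, by simp⟩
      · have := hA i h0 hix
        exact ⟨this.le, fun h => absurd h this.ne⟩
    · have h1 := ih (i - x.length) (by omega)
      rw [List.take_append, List.take_of_length_le (by omega), fv_append, hx0, zero_add]
      have hp : 0 < t ^ x.length := by positivity
      refine ⟨mul_nonpos_of_nonneg_of_nonpos hp.le h1.1, fun h => ?_⟩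
      obtain ⟨k, hk, hki⟩ := h1.2 ((mul_eq_zero.1 h).resolve_left hp.ne')
      exact ⟨k + 1, by omega, by rw [add_mul]; omega⟩

theorem rep_take {I : Type*} (x Z : List I) (r k : ℕ) (hk : k ≤ r) :
    ((List.replicate r x).flatten ++ Z).take (k * x.length) = (List.replicate k x).flatten := by
  obtain ⟨s, rfl⟩ := Nat.exists_eq_add_of_le hk
  rw [List.replicate_add, List.flatten_append, List.append_assoc]
  apply List.take_left'
  simp

theorem fv_rep {I : Type*} {g : I → ℚ} {t : ℚ} {x : List I} (hx0 : fv g t x = 0) (k : ℕ) :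
    fv g t (List.replicate k x).flatten = 0 := by
  induction k with
  | zero => simp [fv]
  | succ k ih => rw [List.replicate_succ, List.flatten_cons, fv_append, hx0, ih]; simp

theorem sum_slice {I : Type*} (G : I → ℤ) (l : List I) (a b : ℕ) :
    ∑ m : Fin l.length, (if a ≤ m.val ∧ m.val < b then G (l.get m) else 0) =
      (((l.take b).drop a).map G).sum := by
  induction l generalizing a b with
  | nil => simp
  | cons z l ih =>
    refine (Fin.sum_univ_succ (n := l.length) _).trans ?_
    cases b with
    | zero => simp
    | succ b =>
      cases a with
      | zero =>
        have := ih 0 b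
        simp only [Nat.zero_le, true_and, List.drop_zero] at this
        simpa using this
      | succ a =>
        have := ih a b
        simpa using this

theorem wtZ_cons {I : Type*} (a : I) (w : List I) :
    wtZ (a :: w) = Finsupp.single a 1 + wtZ w := by simp [wtZ]

theorem sum_wtZ {I : Type*} [Fintype I] (G : I → ℤ) (w : List I) :
    ∑ i : I, wtZ w i * G i = (w.map G).sum := by
  classical
  induction w with
  | nil => simp [wtZ]
  | cons a w ih =>
    simp only [wtZ_cons, Finsupp.add_apply, add_mul, Finset.sum_add_distrib, ih, List.map_cons,
      List.sum_cons]
    congr 1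
    rw [Finset.sum_eq_single a]
    · simp
    · intro b _ hb; simp [Ne.symm hb]
    · simp

theorem bform_wtZ {I : Type*} [Fintype I] (c : I → I → ℤ) (v w : List I) :
    bform c (wtZ v) (wtZ w) = (v.map fun a => (w.map fun b => c a b).sum).sum := by
  rw [← sum_wtZ, bform]
  refine Finset.sum_congr rfl fun i _ => ?_
  rw [← sum_wtZ, Finset.mul_sum]
  refine Finset.sum_congr rfl fun j _ => by ring

theorem wtZ_rep {I : Type*} (x : List I) (k : ℕ) :
    wtZ (List.replicate k x).flatten = (k : ℤ) • wtZ x := by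
  induction k with
  | zero => simp [wtZ]
  | succ k ih =>
    have : ∀ u v : List I, wtZ (u ++ v) = wtZ u + wtZ v := by intro u v; simp [wtZ]
    rw [List.replicate_succ, List.flatten_cons, this, ih]
    push_cast
    rw [add_smul, one_smul, add_comm]

theorem eStat_blk {I : Type*} [Fintype I] (c : I → I → ℤ) (x y : List I) (r : ℕ)
    (h : x.length + r ≤ (x ++ y).length)
    (hw : (List.ofFn fun p => (x ++ y).get (blk _ x.length r h p)) = x ++ y) :
    eStat c (x ++ y) x.length (blk _ x.length r h) = bform c (wtZ x) (wtZ (y.take r)) := by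
  have hget : ∀ p, (x ++ y).get (blk _ x.length r h p) = (x ++ y).get p := by
    intro p
    have h1 : (x ++ y).get p = (List.ofFn fun p => (x ++ y).get (blk _ x.length r h p)).get
        (Fin.cast (by simp) p) := by
      simp only [List.get_eq_getElem, Fin.val_cast]
      congr 1
      exact hw.symm
    rw [h1, List.get_ofFn]
    rfl
  rw [eStat, bform_wtZ]
  have h1 : ∀ k m : Fin (x ++ y).length,
      (if k.val < x.length ∧ x.length ≤ m.val ∧
        (blk _ x.length r h)⁻¹ m < (blk _ x.length r h)⁻¹ k then
        c ((x ++ y).get (blk _ x.length r h k)) ((x ++ y).get (blk _ x.length r h m)) else 0) =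
      if 0 ≤ k.val ∧ k.val < x.length then
        (if x.length ≤ m.val ∧ m.val < x.length + r then
          c ((x ++ y).get k) ((x ++ y).get m) else 0) else 0 := by
    intro k m
    rw [hget, hget]
    have : (k.val < x.length ∧ x.length ≤ m.val ∧
        (blk _ x.length r h)⁻¹ m < (blk _ x.length r h)⁻¹ k) ↔
        ((0 ≤ k.val ∧ k.val < x.length) ∧ (x.length ≤ m.val ∧ m.val < x.length + r)) := by
      rw [Fin.lt_def, blk_inv, blk_inv]
      constructor
      · rintro ⟨h1, h2, h3⟩
        split_ifs at h3 <;> omega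
      · rintro ⟨⟨_, h1⟩, h2, h3⟩
        refine ⟨h1, h2, ?_⟩
        split_ifs <;> omega
    simp only [this, ite_and]
  simp only [h1]
  have h2 : ∀ k : Fin (x ++ y).length, ∑ m : Fin (x ++ y).length,
      (if 0 ≤ k.val ∧ k.val < x.length then
        (if x.length ≤ m.val ∧ m.val < x.length + r then
          c ((x ++ y).get k) ((x ++ y).get m) else 0) else 0) =
      if 0 ≤ k.val ∧ k.val < x.length then
        (fun a => ((y.take r).map fun b => c a b).sum) ((x ++ y).get k) else 0 := by
    intro k
    split_ifs
    · rw [sum_slice (fun b => c ((x ++ y).get k) b)]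
      simp [List.take_append]
    · simp
  rw [Finset.sum_congr rfl fun k _ => h2 k,
    sum_slice (fun a => ((y.take r).map fun b => c a b).sum)]
  simp

theorem even_sum {I : Type*} (f : I → I → ℤ) (hs : ∀ i j, f i j = f j i)
    (hd : ∀ i, Even (f i i)) (s : Finset I) : Even (∑ i ∈ s, ∑ j ∈ s, f i j) := by
  classical
  induction s using Finset.induction_on with
  | empty => simp
  | insert a s ha ih =>
    rw [Finset.sum_insert ha, Finset.sum_insert ha]
    have : ∑ i ∈ s, ∑ j ∈ insert a s, f i j = ∑ j ∈ s, f a j + ∑ i ∈ s, ∑ j ∈ s, f i j := by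
      rw [← Finset.sum_add_distrib]
      refine Finset.sum_congr rfl fun i _ => ?_
      rw [Finset.sum_insert ha, hs i a]
    rw [this]
    have h2 : f a a + ∑ x ∈ s, f a x + (∑ j ∈ s, f a j + ∑ i ∈ s, ∑ j ∈ s, f i j) =
      f a a + (∑ x ∈ s, f a x + ∑ x ∈ s, f a x) + ∑ i ∈ s, ∑ j ∈ s, f i j := by ring
    rw [h2]
    exact ((hd a).add ⟨_, rfl⟩).add ih

theorem bform_even {I : Type*} [Fintype I] (c : I → I → ℤ) (hsymm : ∀ i j, c i j = c j i)
    (hdiag : ∀ i, Even (c i i)) (β : I →₀ ℤ) : Even (bform c β β) := by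
  apply even_sum
  · intro i j; rw [hsymm i j]; ring
  · intro i; exact (hdiag i).mul_left _

/-- The product of (unbalanced) quantum integers. -/
noncomputable def Qb (B : ℤ) (n : ℕ) : LaurentPolynomial ℤ :=
  ∏ s ∈ Finset.range n, ∑ k ∈ Finset.range (s + 1), T (-((k : ℤ) * B))

theorem Qb_eq {I : Type*} [Fintype I] (c : I → I → ℤ) (β : I →₀ ℤ) (hB : Even (bform c β β))
    (n : ℕ) : (T (-(bform c β β / 2 * ((n * (n - 1) / 2 : ℕ) : ℤ))) : LaurentPolynomial ℤ) *
      qFact c β n = Qb (bform c β β) n := by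
  obtain ⟨b, hb⟩ := hB
  have hb2 : bform c β β / 2 = b := by omega
  rw [hb2]
  induction n with
  | zero => simp [qFact, Qb]
  | succ n ih =>
    rw [Qb, Finset.prod_range_succ, ← Qb, ← ih, qFact, Finset.prod_range_succ, ← qFact]
    have h1 : ((n + 1) * (n + 1 - 1) / 2 : ℕ) = n * (n - 1) / 2 + n := by
      rw [← Finset.sum_range_id_mul_two, ← Finset.sum_range_id_mul_two, Finset.sum_range_succ]
      omega
    have h2 : ∑ k ∈ Finset.range (n + 1), (T (-((k : ℤ) * bform c β β)) : LaurentPolynomial ℤ) =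
        T (-(b * n)) * qInt c β (n + 1) := by
      rw [qInt, Finset.mul_sum]
      refine Finset.sum_congr rfl fun k _ => ?_
      rw [← T_add, hb2, hb]
      congr 1
      push_cast
      ring
    rw [h1, h2]
    push_cast
    rw [mul_add, neg_add, T_add]
    ring

theorem word_mono {I : Type*} [LinearOrder I] {n d : ℕ} {u u' : List I} (hu : u.length = n)
    (hu' : u'.length = n) (hpre : ∀ i (h : i < u.length) (h' : i < u'.length), i < d → u[i] = u'[i])
    (hlt : u' < u) {σ : Equiv.Perm (Fin n)} (hσ : IsShuffle2 d σ) :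
    (List.ofFn fun p => u'.get (Fin.cast hu'.symm (σ p))) <
      (List.ofFn fun p => u.get (Fin.cast hu.symm (σ p))) := by
  rw [List.lt_iff_exists] at hlt
  rcases hlt with ⟨_, h⟩ | ⟨i, h1, h2, heq, hl⟩
  · omega
  · have hid : d ≤ i := by
      by_contra hid
      rw [hpre i h2 h1 (by omega)] at hl
      exact lt_irrefl _ hl
    rw [List.lt_iff_exists]
    right
    refine ⟨(σ⁻¹ ⟨i, by omega⟩ : Fin n), by simp, by simp, ?_, ?_⟩
    · intro p hp
      have hpn : p < n := hp.trans (Fin.is_lt _)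
      simp only [List.getElem_ofFn, List.get_eq_getElem, Fin.val_cast]
      rcases lt_trichotomy (σ ⟨p, hpn⟩ : ℕ) i with h | h | h
      · exact heq _ h
      · exfalso
        have : σ ⟨p, hpn⟩ = ⟨i, by omega⟩ := Fin.ext h
        rw [← this] at hp; simp at hp
      · exfalso
        have := hσ ⟨i, by omega⟩ (σ ⟨p, hpn⟩) h (Or.inr ⟨hid, by omega⟩)
        have hi : σ⁻¹ (σ ⟨p, hpn⟩) = ⟨p, hpn⟩ := by simp
        rw [hi, Fin.lt_def] at this
        simp only at this
        omega
    · simpa using hl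

theorem wordShuffle_ne {I : Type*} [Fintype I] [DecidableEq I] (c : I → I → ℤ)
    (x y w : List I) (h : wordShuffle c x y w ≠ 0) :
    ∃ σ : Equiv.Perm (Fin (x ++ y).length), IsShuffle2 x.length σ ∧
      w = List.ofFn fun p => (x ++ y).get (σ p) := by
  classical
  rw [wordShuffle, Finsupp.finsetSum_apply] at h
  obtain ⟨σ, _, hσ⟩ := Finset.exists_ne_zero_of_sum_ne_zero h
  refine ⟨σ, ?_⟩
  by_cases hs : IsShuffle2 x.length σ
  · refine ⟨hs, ?_⟩
    by_contra hne
    rw [if_pos hs, Finsupp.single_apply, if_neg (fun h => hne h.symm)] at hσ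
    exact hσ rfl
  · rw [if_neg hs] at hσ; simp at hσ

theorem step_word {I : Type*} [Fintype I] [LinearOrder I] (c : I → I → ℤ) {x : List I}
    (hx : IsLyndonWord x) (zs : List (List I)) (hz : ∀ z ∈ zs, z < x) (r : ℕ) (y : List I)
    (hy : y = (List.replicate r x).flatten ++ zs.flatten) :
    (∀ σ : Equiv.Perm (Fin (x ++ y).length), IsShuffle2 x.length σ →
      (List.ofFn fun p => (x ++ y).get (σ p)) ≤ x ++ y) ∧
    wordShuffle c x y (x ++ y) =
      ∑ k ∈ Finset.range (r + 1), T (-((k : ℤ) * bform c (wtZ x) (wtZ x))) := by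
  classical
  obtain ⟨t, ht0, ht1, hex⟩ := exists_LM (I := I)
  obtain ⟨g, hLM, hx0⟩ := hex x hx.1
  have hd : 0 < x.length := List.length_pos_iff.2 hx.1
  have hA : ∀ i, 0 < i → i < x.length → fv g t (x.take i) < 0 := by
    intro i h0 h1
    refine fv_neg ht0 ht1 hLM hx hx0 ?_ ?_
    · intro h
      have := congrArg List.length h
      simp at this
      rcases this with h | h
      · omega
      · exact hx.1 h
    · have hdrop : x.drop i ≠ [] := by simp; omega
      conv_rhs => rw [← List.take_append_drop i x]
      obtain ⟨a, l, hal⟩ := List.exists_cons_of_ne_nil hdrop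
      rw [hal]
      generalize x.take i = p
      induction p with
      | nil => exact List.nil_lt_cons _ _
      | cons b p ih => rw [List.cons_append, List.cons_lt_cons_iff]; exact Or.inr ⟨rfl, ih⟩
  have hP := rep_initial ht0 hx0 hA zs.flatten
    (fun i h0 h1 => neg_flatten ht0 ht1 hLM hx hx0 zs hz i h0 h1) r
  rw [← hy] at hP
  have hB := fun i hi => (hP i hi).1
  have hlen : ∀ σ : Equiv.Perm (Fin (x ++ y).length),
      (List.ofFn fun p => (x ++ y).get (σ p)).length = (x ++ y).length := by
    intro σ; rw [List.length_ofFn]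
  constructor
  · intro σ hσ
    have h1 := (main_le ht0 ht1 hx.1 hx0 hA hB hσ).1
    rcases h1.lt_or_eq with h | h
    · exact (hLM.lt (hlen σ) h).le
    · exact (hLM.inj (hlen σ) h).le
  · have hkle : ∀ k, k < r + 1 → x.length + k * x.length ≤ (x ++ y).length := by
      intro k hk
      have : k * x.length ≤ r * x.length := Nat.mul_le_mul_right _ (by omega)
      rw [hy]; simp; omega
    have htake : ∀ k, k < r + 1 → y.take (k * x.length) = (List.replicate k x).flatten := by
      intro k hk
      rw [hy]; exact rep_take _ _ _ _ (by omega)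
    have hW : ∀ k (hk : k < r + 1), (List.ofFn fun p =>
        (x ++ y).get (blk _ x.length (k * x.length) (hkle k hk) p)) = x ++ y := by
      intro k hk
      apply hLM.inj (hlen _)
      apply blk_word_fv hx0
      rw [htake k hk, fv_rep hx0]
    rw [wordShuffle, Finsupp.finsetSum_apply]
    symm
    have hval : ∀ k (hk : k < r + 1),
        (if IsShuffle2 x.length (blk _ x.length (k * x.length) (hkle k hk)) then
          Finsupp.single (List.ofFn fun p =>
            (x ++ y).get (blk _ x.length (k * x.length) (hkle k hk) p))
          (T (- eStat c (x ++ y) x.length (blk _ x.length (k * x.length) (hkle k hk))) :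
            LaurentPolynomial ℤ)
        else 0) (x ++ y) = T (-((k : ℤ) * bform c (wtZ x) (wtZ x))) := by
      intro k hk
      rw [if_pos (blk_shuffle _ _ _ _), hW k hk, Finsupp.single_eq_same,
        eStat_blk c x y _ _ (hW k hk), htake k hk, wtZ_rep]
      congr 2
      simp only [bform, Finset.mul_sum, Finsupp.smul_apply, smul_eq_mul]
      refine Finset.sum_congr rfl fun i _ => Finset.sum_congr rfl fun j _ => by ring
    refine Finset.sum_of_injOn
      (fun k => if hk : k < r + 1 then blk _ x.length (k * x.length) (hkle k hk) else 1)
      ?_ ?_ ?_ ?_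
    · intro k hk k' hk' he
      simp only [Finset.coe_range, Set.mem_Iio] at hk hk'
      simp only [dif_pos hk, dif_pos hk'] at he
      have h0 : 0 < (x ++ y).length := by simp; omega
      have h1 : ((blk _ x.length (k * x.length) (hkle k hk))⁻¹ ⟨0, h0⟩ : Fin _).val =
        ((blk _ x.length (k' * x.length) (hkle k' hk'))⁻¹ ⟨0, h0⟩ : Fin _).val := by rw [he]
      rw [blk_inv, blk_inv] at h1
      simp only [if_pos hd, zero_add] at h1
      exact Nat.eq_of_mul_eq_mul_right hd h1
    · intro k _; simp
    · intro σ _ hσ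
      by_cases hs : IsShuffle2 x.length σ
      · rw [if_pos hs, Finsupp.single_apply, if_neg]
        intro he
        apply hσ
        obtain ⟨q, hq, hq0, hσq⟩ := (main_le ht0 ht1 hx.1 hx0 hA hB hs).2 (by rw [he])
        obtain ⟨k, hk, rfl⟩ := (hP q (by simp at hq; omega)).2 hq0
        refine ⟨k, by simp; omega, ?_⟩
        simp only [dif_pos (show k < r + 1 by omega)]
        exact hσq.symm
      · rw [if_neg hs]; rfl
    · intro k hk
      rw [Finset.mem_range] at hk
      simp only [dif_pos hk]
      exact (hval k hk).symm

/-- The support condition. -/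
def Supp {I : Type*} [LinearOrder I] (G : (List I) →₀ LaurentPolynomial ℤ) (y : List I) : Prop :=
  ∀ w, G w ≠ 0 → w.length = y.length ∧ w ≤ y

theorem shuffle_lt {I : Type*} [Fintype I] [LinearOrder I] {x y y' : List I}
    (hl : y'.length = y.length) (hlt : y' < y)
    (hmax : ∀ σ : Equiv.Perm (Fin (x ++ y).length), IsShuffle2 x.length σ →
      (List.ofFn fun p => (x ++ y).get (σ p)) ≤ x ++ y)
    (σ : Equiv.Perm (Fin (x ++ y').length)) (hσ : IsShuffle2 x.length σ) :
    (List.ofFn fun p => (x ++ y').get (σ p)) < x ++ y := by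
  have hu : (x ++ y).length = (x ++ y').length := by simp [hl]
  have hult : x ++ y' < x ++ y := by
    clear hmax hσ σ hu
    induction x with
    | nil => exact hlt
    | cons b p ih => rw [List.cons_append, List.cons_append, List.cons_lt_cons_iff]; exact Or.inr ⟨rfl, ih⟩
  have h1 := word_mono hu rfl (fun i h h' hi => by
    rw [List.getElem_append_left hi, List.getElem_append_left hi]) hult hσ
  have key : ∀ (u : List I) (n : ℕ) (hu : u.length = n) (σ : Equiv.Perm (Fin n)),
      IsShuffle2 x.length σ → (∀ σ : Equiv.Perm (Fin u.length), IsShuffle2 x.length σ →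
      (List.ofFn fun p => u.get (σ p)) ≤ u) →
      (List.ofFn fun p => u.get (Fin.cast hu.symm (σ p))) ≤ u := by
    intro u n hu σ hσ hm
    subst hu
    exact hm σ hσ
  exact lt_of_lt_of_le h1 (key _ _ hu σ hσ hmax)

theorem step {I : Type*} [Fintype I] [LinearOrder I] (c : I → I → ℤ) {x : List I}
    (hx : IsLyndonWord x) (zs : List (List I)) (hz : ∀ z ∈ zs, z < x) (r : ℕ) (y : List I)
    (hy : y = (List.replicate r x).flatten ++ zs.flatten)
    (G : (List I) →₀ LaurentPolynomial ℤ) (hG : Supp G y) :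
    Supp (shuffleF c x G) (x ++ y) ∧ shuffleF c x G (x ++ y) =
      (∑ k ∈ Finset.range (r + 1), T (-((k : ℤ) * bform c (wtZ x) (wtZ x)))) * G y := by
  obtain ⟨hmax, hcoef⟩ := step_word c hx zs hz r y hy
  have happ : ∀ w, shuffleF c x G w = ∑ y' ∈ G.support, G y' * wordShuffle c x y' w := by
    intro w
    rw [shuffleF, Finsupp.sum, Finsupp.finsetSum_apply]
    rfl
  constructor
  · intro w hw
    rw [happ] at hw
    obtain ⟨y', hy', hne⟩ := Finset.exists_ne_zero_of_sum_ne_zero hw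
    obtain ⟨hl, hle⟩ := hG y' (Finsupp.mem_support_iff.1 hy')
    obtain ⟨σ, hσ, rfl⟩ := wordShuffle_ne c x y' w (right_ne_zero_of_mul hne)
    refine ⟨by rw [List.length_ofFn]; simp [hl], ?_⟩
    rcases hle.lt_or_eq with h | h
    · exact (shuffle_lt hl h hmax σ hσ).le
    · subst h; exact hmax σ hσ
  · rw [happ, ← hcoef, mul_comm]
    rw [Finset.sum_eq_single y]
    · intro y' hy' hne
      obtain ⟨hl, hle⟩ := hG y' (Finsupp.mem_support_iff.1 hy')
      by_contra hne0
      obtain ⟨σ, hσ, he⟩ := wordShuffle_ne c x y' _ (right_ne_zero_of_mul hne0)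
      have := shuffle_lt hl (lt_of_le_of_ne hle hne) hmax σ hσ
      rw [← he] at this
      exact lt_irrefl _ this
    · intro h
      rw [Finsupp.notMem_support_iff.1 h, zero_mul]

theorem block {I : Type*} [Fintype I] [LinearOrder I] (c : I → I → ℤ) {x : List I}
    (hx : IsLyndonWord x) (zs : List (List I)) (hz : ∀ z ∈ zs, z < x)
    (hG : Supp (shuffleList c zs) zs.flatten) (r : ℕ) :
    Supp (shuffleList c (List.replicate r x ++ zs)) (List.replicate r x ++ zs).flatten ∧
    shuffleList c (List.replicate r x ++ zs) (List.replicate r x ++ zs).flatten =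
      Qb (bform c (wtZ x) (wtZ x)) r * shuffleList c zs zs.flatten := by
  induction r with
  | zero => simpa [Qb] using hG
  | succ r ih =>
    have h1 := step c hx zs hz r _ List.flatten_append _ ih.1
    rw [List.replicate_succ, List.cons_append, List.flatten_cons]
    refine ⟨h1.1, ?_⟩
    rw [shuffleList, h1.2, ih.2, Qb, Qb, Finset.prod_range_succ]
    ring

theorem total {I : Type*} [Fintype I] [LinearOrder I] (c : I → I → ℤ)
    {m : ℕ} (j : Fin m → List I) (n : Fin m → ℕ)
    (hLyn : ∀ k, IsLyndonWord (j k))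
    (hdec : ∀ k l : Fin m, k < l → j l < j k) (ws : List (List I))
    (hws : ws = (List.ofFn fun k => List.replicate (n k) (j k)).flatten) :
    Supp (shuffleList c ws) ws.flatten ∧ shuffleList c ws ws.flatten =
      ∏ k : Fin m, Qb (bform c (wtZ (j k)) (wtZ (j k))) (n k) := by
  induction m generalizing ws with
  | zero =>
    subst hws
    simp only [List.ofFn_zero, List.flatten_nil, shuffleList, Finset.univ_eq_empty,
      Finset.prod_empty, Finsupp.single_eq_same, and_true]
    intro w hw
    by_cases h : w = []
    · subst h; simp
    · simp [Ne.symm h] at hw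
  | succ m ih =>
    rw [List.ofFn_succ, List.flatten_cons] at hws
    have h1 := ih (fun k => j k.succ) (fun k => n k.succ) (fun k => hLyn _)
      (fun k l hkl => hdec _ _ (Fin.succ_lt_succ_iff.2 hkl)) _ rfl
    have h2 := block c (hLyn 0) _ ?_ h1.1 (n 0)
    · rw [← hws] at h2
      refine ⟨h2.1, ?_⟩
      rw [h2.2, h1.2, Fin.prod_univ_succ]
    · intro z hz
      rw [List.mem_flatten] at hz
      obtain ⟨l, hl, hzl⟩ := hz
      rw [List.mem_ofFn] at hl
      obtain ⟨k, rfl⟩ := hl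
      rw [List.eq_of_mem_replicate hzl]
      exact hdec _ _ (Fin.succ_pos k)

end TopCoeff

/-- Let `i = (j⁽¹⁾)^{n_1} ⋯ (j⁽ᵐ⁾)^{n_m}` be a canonical factorization with
Lyndon words `j⁽¹⁾ > ⋯ > j⁽ᵐ⁾` and `n_k ≥ 1`, and set `β_k := |j⁽ᵏ⁾|`.  In the iterated quantum
shuffle product `(j⁽¹⁾)°ⁿ¹ ° ⋯ ° (j⁽ᵐ⁾)°ⁿᵐ` the coefficient of the word `i` equals
`∏_k q_{β_k}^{-n_k(n_k-1)/2} [n_k]!_{β_k}`, and every other word occurring with nonzero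
coefficient is lexicographically strictly smaller than `i`. -/
theorem top_coefficient_of_canonical_shuffle {I : Type*} [Fintype I] [LinearOrder I]
    (c : I → I → ℤ)
    (hsymm : ∀ i j, c i j = c j i)
    (hdiag : ∀ i, 0 < c i i ∧ Even (c i i))
    (hoff : ∀ i j, i ≠ j → 2 * c i j ≤ 0 ∧ c i i ∣ 2 * c i j)
    {m : ℕ} (j : Fin m → List I) (n : Fin m → ℕ)
    (hLyn : ∀ k, IsLyndonWord (j k))
    (hdec : ∀ k l : Fin m, k < l → j l < j k)
    (hn : ∀ k, 1 ≤ n k)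
    (ws : List (List I))
    (hws : ws = (List.ofFn fun k => List.replicate (n k) (j k)).flatten)
    (iWord : List I) (hi : iWord = ws.flatten) :
    (shuffleList c ws) iWord =
      ∏ k : Fin m,
        (T (- (bform c (wtZ (j k)) (wtZ (j k)) / 2 * ((n k * (n k - 1) / 2 : ℕ) : ℤ)))
            : LaurentPolynomial ℤ) * qFact c (wtZ (j k)) (n k) ∧
    ∀ w : List I, (shuffleList c ws) w ≠ 0 → w ≠ iWord → w < iWord := by
  have h := TopCoeff.total c j n hLyn hdec ws hws
  subst hi
  refine ⟨?_, fun w hw hne => lt_of_le_of_ne (h.1 w hw).2 hne⟩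
  rw [h.2]
  refine Finset.prod_congr rfl fun k _ => ?_
  exact (TopCoeff.Qb_eq c _ (TopCoeff.bform_even c hsymm (fun i => (hdiag i).2) _) (n k)).symm
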